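/- Let n ≥ 3, let S ⊆ Σ^n be a double-MDS-code, let k ∈ {1,…,n}, and for i ∈ Σ put P_i = S|_k^i ∩ {0,1}^(n−1). Suppose that either (a) n = 3, some P_i equals {0,1}^2, and all four P_i are nonempty, or (b) {P₀,P₁,P₂,P₃} = {{0,1}^(n−1), {ᾱ}, {¬ᾱ}, {0,1}^(n−1) \ {ᾱ,¬ᾱ}} for some ᾱ ∈ {0,1}^(n−1), where ¬ᾱ is the coordinatewise complement of ᾱ. Then neither S nor Σ^n \ S is splittable. -/

import Mathlib

/-- The alphabet `Σ = {0,1,2,3}`. -/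
abbrev V4 := Fin 4

/-- The `k`-edge through `x`. -/
def kEdge {n : ℕ} (x : Fin n → V4) (k : Fin n) : Set (Fin n → V4) :=
  {y | ∃ a : V4, y = Function.update x k a}

/-- A (distance 2) MDS code. -/
def IsMDSCode {n : ℕ} (C : Set (Fin n → V4)) : Prop :=
  ∀ (x : Fin n → V4) (k : Fin n), (kEdge x k ∩ C).ncard = 1

/-- A double-MDS-code. -/
def IsDoubleMDSCode {n : ℕ} (S : Set (Fin n → V4)) : Prop :=
  ∀ (x : Fin n → V4) (k : Fin n), (kEdge x k ∩ S).ncard = 2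

/-- A set is splittable if it is the union of two disjoint MDS codes. -/
def IsSplittable {n : ℕ} (S : Set (Fin n → V4)) : Prop :=
  ∃ C₁ C₂ : Set (Fin n → V4),
    IsMDSCode C₁ ∧ IsMDSCode C₂ ∧ Disjoint C₁ C₂ ∧ S = C₁ ∪ C₂

/-- The `y`-th layer of `S ⊆ Σ^(n+1)` in direction `k`. -/
def layer {n : ℕ} (S : Set (Fin (n + 1) → V4)) (k : Fin (n + 1)) (y : V4) :
    Set (Fin n → V4) :=
  {x | k.insertNth y x ∈ S}

/-- The Boolean `n`-cube `{0,1}^n` inside `Σ^n`. -/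
def boolCube (n : ℕ) : Set (Fin n → V4) :=
  {x | ∀ i, x i = 0 ∨ x i = 1}

/-!
A splitting of `S` colours the points of `S` with two signs so that any two points on a common edge
get opposite signs; we show that no such colouring of `S` or of `Sᶜ` exists.

Cut the alphabet into the halves `{0,1}` and `{2,3}`. A choice `T` of a half in every coordinate
gives a cube in each layer. Suppose that over some `T` the set `S` has three layers whose traces are
the full cube, `{β₁}` and `{β₂}`. Since `S` meets every edge in two points, exchanging the half in
direction `i` turns these traces into the empty set and the complements of two single vertices,
where `β₁` and `β₂` may have changed only in coordinate `i`. So the same situation occurs for `Sᶜ`.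
A signing alternates along the edges of a cube, so up to the parity of the vertex it is constant on
the full trace and on the two punctured ones; comparing these constants shows that if `β₁` and `β₂`
differ at `i`, then the new vertices agree at `i`. Hence the Hamming distance can be decreased until
`β₁ = β₂`, where three points of `S` lie on one edge.
-/

section BooleanCube

variable {ι : Type*} [DecidableEq ι]

/-- The neighbour of `b` in the cube `ι → Bool` in direction `i`. -/
def flipAt (b : ι → Bool) (i : ι) : ι → Bool :=
  Function.update b i (!b i)

theorem flipAt_apply_self (b : ι → Bool) (i : ι) : flipAt b i i = !b i :=
  Function.update_self ..

theorem flipAt_flipAt (b : ι → Bool) (i : ι) : flipAt (flipAt b i) i = b := by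
  simp [flipAt]

theorem update_eq_self_or_flipAt (b : ι → Bool) (i : ι) (v : Bool) :
    Function.update b i v = b ∨ Function.update b i v = flipAt b i := by
  by_cases hv : v = b i
  · exact .inl (hv ▸ Function.update_eq_self i b)
  · exact .inr (by rw [flipAt, Bool.eq_not.2 hv])

theorem eq_of_forall_piecewise_mem [Finite ι] {α : Type*} {F : (ι → Bool) → α}
    {U : Set (ι → Bool)}
    (hF : ∀ b i, b ∈ U → flipAt b i ∈ U → F (flipAt b i) = F b) {b c : ι → Bool}
    (hU : ∀ s : Finset ι, s.piecewise c b ∈ U) : F b = F c := by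
  have path : ∀ s : Finset ι, F (s.piecewise c b) = F b := fun s => by
    induction s using Finset.induction_on with
    | empty => simp
    | insert i s _ ih =>
      have hi := hU (insert i s)
      rw [Finset.piecewise_insert] at hi ⊢
      rcases update_eq_self_or_flipAt (s.piecewise c b) i (c i) with h | h
      · rw [h, ih]
      · rw [h] at hi ⊢
        rw [hF _ i (hU s) hi, ih]
  have := Fintype.ofFinite ι
  rw [← path Finset.univ, Finset.piecewise_univ]

/-- The antipode of the missing vertex can be reached from everywhere by moving away from it. -/
theorem eq_of_flipAt_invariant_on_compl_singleton [Finite ι] {α : Type*}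
    {F : (ι → Bool) → α} {γ : ι → Bool}
    (hF : ∀ b i, b ≠ γ → flipAt b i ≠ γ → F (flipAt b i) = F b) {b c : ι → Bool}
    (hb : b ≠ γ) (hc : c ≠ γ) : F b = F c := by
  have to_antipode : ∀ b, b ≠ γ → F b = F (fun i => !γ i) := fun b hb => by
    refine eq_of_forall_piecewise_mem (U := {γ}ᶜ) hF fun s => ?_
    rintro (h : s.piecewise (fun i => !γ i) b = γ)
    obtain rfl | ⟨i, hi⟩ := s.eq_empty_or_nonempty
    · exact hb (by simpa using h)
    · simpa [hi] using congrFun h i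
  rw [to_antipode b hb, to_antipode c hc]

variable [Fintype ι]

/-- The parity of a vertex of the cube, as a sign. -/
def cubeSign (b : ι → Bool) : ℤˣ :=
  ∏ i, if b i then -1 else 1

theorem cubeSign_flipAt (b : ι → Bool) (i : ι) : cubeSign (flipAt b i) = -cubeSign b := by
  have off_i : ∀ j ∈ Finset.univ.erase i,
      (if flipAt b i j then (-1 : ℤˣ) else 1) = if b j then -1 else 1 := fun j hj => by
    rw [flipAt, Function.update_of_ne (Finset.ne_of_mem_erase hj)]
  rw [cubeSign, cubeSign, ← Finset.mul_prod_erase _ _ (Finset.mem_univ i),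
    Finset.prod_congr rfl off_i, ← Finset.mul_prod_erase _ _ (Finset.mem_univ i),
    flipAt_apply_self, ← neg_mul]
  cases b i <;> simp

theorem hammingDist_update_lt {β : ι → Type*} [∀ i, DecidableEq (β i)] {x y : ∀ i, β i} {i : ι}
    (hi : x i ≠ y i) (v : β i) :
    hammingDist (Function.update x i v) (Function.update y i v) < hammingDist x y := by
  refine Finset.card_lt_card (Finset.ssubset_iff_of_subset (fun j => ?_) |>.2 ⟨i, ?_⟩)
  · rcases eq_or_ne j i with rfl | hj
    · simp
    · simp [hj]
  · simp [hi]

end BooleanCube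

section Cubes

variable {ι : Type*}

/-- The letter of `Σ` in the half `{0,1}` (`t = false`) or `{2,3}` (`t = true`) selected by `v`. -/
def letter (t v : Bool) : V4 :=
  match t, v with
  | false, false => 0
  | false, true => 1
  | true, false => 2
  | true, true => 3

theorem letter_injective (t : Bool) : Function.Injective (letter t) := by
  revert t; decide

theorem letter_not_ne (t v w : Bool) : letter (!t) w ≠ letter t v := by
  revert t v w; decide

theorem ncard_preimage_letter_add (A : Set V4) (t : Bool) :
    (letter t ⁻¹' A).ncard + (letter (!t) ⁻¹' A).ncard = A.ncard := by
  have union_images : letter t '' (letter t ⁻¹' A) ∪ letter (!t) '' (letter (!t) ⁻¹' A) = A := by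
    have covers : ∀ t a, ∃ v, letter t v = a ∨ letter (!t) v = a := by decide
    ext a
    obtain ⟨v, rfl | rfl⟩ := covers t a <;>
      simp [(letter_injective _).eq_iff, letter_not_ne, (letter_not_ne _ _ _).symm]
  have disjoint_images :
      Disjoint (letter t '' (letter t ⁻¹' A)) (letter (!t) '' (letter (!t) ⁻¹' A)) := by
    rw [Set.disjoint_left]
    rintro _ ⟨v, -, rfl⟩ ⟨w, -, h⟩
    exact letter_not_ne t v w h
  rw [← Set.ncard_image_of_injective _ (letter_injective t),
    ← Set.ncard_image_of_injective _ (letter_injective (!t)),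
    ← Set.ncard_union_eq disjoint_images, union_images]

/-- The vertex `b` of the cube in `Σ^ι` whose `i`-th coordinates range over the half `T i` of the
alphabet. -/
def cubePoint (T b : ι → Bool) : ι → V4 :=
  fun i => letter (T i) (b i)

theorem cubePoint_injective (T : ι → Bool) : Function.Injective (cubePoint T) :=
  fun _ _ h => funext fun i => letter_injective (T i) (congrFun h i)

theorem cubePoint_false_not (b : ι → Bool) :
    cubePoint (fun _ => false) (fun i => !b i) = fun i => 1 - cubePoint (fun _ => false) b i := by
  funext i
  cases h : b i <;> simp [cubePoint, letter, h]

theorem cubePoint_update_update [DecidableEq ι] (T b : ι → Bool) (i : ι) (t v : Bool) :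
    cubePoint (Function.update T i t) (Function.update b i v) =
      Function.update (cubePoint T b) i (letter t v) := by
  funext j
  rcases eq_or_ne j i with rfl | hj
  · simp [cubePoint]
  · simp [cubePoint, hj]

theorem cubePoint_update [DecidableEq ι] (T b : ι → Bool) (i : ι) (v : Bool) :
    cubePoint T (Function.update b i v) = Function.update (cubePoint T b) i (letter (T i) v) := by
  rw [← cubePoint_update_update, Function.update_eq_self]

theorem range_cubePoint_false (n : ℕ) :
    Set.range (cubePoint fun _ : Fin n => false) = boolCube n := by
  refine Set.Subset.antisymm ?_ fun x hx => ⟨fun i => decide (x i = 1), funext fun i => ?_⟩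
  · rintro _ ⟨b, rfl⟩ i
    cases h : b i <;> simp [cubePoint, letter, h]
  · rcases hx i with h | h <;> simp [cubePoint, letter, h]

/-- The part of `S` lying in the cube selected by `T`, in the coordinates of that cube. -/
def cubeTrace (S : Set (ι → V4)) (T : ι → Bool) : Set (ι → Bool) :=
  cubePoint T ⁻¹' S

theorem cubeTrace_singleton_cubePoint (T β : ι → Bool) : cubeTrace {cubePoint T β} T = {β} :=
  Set.ext fun _ => (cubePoint_injective T).eq_iff

theorem cubeTrace_boolCube (n : ℕ) : cubeTrace (boolCube n) (fun _ => false) = Set.univ := by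
  rw [cubeTrace, ← range_cubePoint_false, Set.preimage_range]

theorem cubeTrace_inter_boolCube {n : ℕ} (A : Set (Fin n → V4)) :
    cubeTrace (A ∩ boolCube n) (fun _ => false) = cubeTrace A fun _ => false := by
  rw [cubeTrace, Set.preimage_inter, ← cubeTrace, ← cubeTrace, cubeTrace_boolCube, Set.inter_univ]

theorem nonempty_cubeTrace_of_inter_boolCube {n : ℕ} {A : Set (Fin n → V4)}
    (hA : (A ∩ boolCube n).Nonempty) : (cubeTrace A fun _ => false).Nonempty := by
  obtain ⟨x, hxA, hx⟩ := hA
  obtain ⟨b, rfl⟩ := (range_cubePoint_false n).symm.subset hx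
  exact ⟨b, hxA⟩

end Cubes

section DoubleMDSCode

variable {n : ℕ}

theorem ncard_kEdge_inter (x : Fin n → V4) (k : Fin n) (C : Set (Fin n → V4)) :
    (kEdge x k ∩ C).ncard = {a | Function.update x k a ∈ C}.ncard := by
  have edge_eq_image :
      kEdge x k ∩ C = Function.update x k '' {a | Function.update x k a ∈ C} := by
    ext y
    constructor
    · rintro ⟨⟨a, rfl⟩, ha⟩
      exact ⟨a, ha, rfl⟩
    · rintro ⟨a, ha, rfl⟩
      exact ⟨⟨a, rfl⟩, ha⟩
  rw [edge_eq_image, Set.ncard_image_of_injective _ (Function.update_injective x k)]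

theorem IsMDSCode.eq_of_update_mem {C : Set (Fin n → V4)} (hC : IsMDSCode C) {x : Fin n → V4}
    {k : Fin n} {a : V4} (hx : x ∈ C) (ha : Function.update x k a ∈ C) : a = x k := by
  have edge := hC x k
  rw [ncard_kEdge_inter, Set.ncard_eq_one] at edge
  obtain ⟨p, hp⟩ := edge
  have eq_p : ∀ b, Function.update x k b ∈ C → b = p := fun b hb => hp.subset hb
  rw [eq_p a ha, eq_p (x k) (by rwa [Function.update_eq_self])]

namespace IsDoubleMDSCode

theorem ncard_update_mem {S : Set (Fin n → V4)} (hS : IsDoubleMDSCode S) (x : Fin n → V4)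
    (k : Fin n) : {a | Function.update x k a ∈ S}.ncard = 2 := by
  rw [← ncard_kEdge_inter, hS]

theorem compl {S : Set (Fin n → V4)} (hS : IsDoubleMDSCode S) : IsDoubleMDSCode Sᶜ := by
  intro x k
  have card := Set.ncard_add_ncard_compl {a | Function.update x k a ∈ S}
  rw [hS.ncard_update_mem, Nat.card_eq_fintype_card, Fintype.card_fin] at card
  rw [ncard_kEdge_inter]
  exact Nat.add_left_cancel card

theorem ncard_setOf_mem_layer {S : Set (Fin (n + 1) → V4)} (hS : IsDoubleMDSCode S)
    (k : Fin (n + 1)) (x : Fin n → V4) : {l : V4 | x ∈ layer S k l}.ncard = 2 := by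
  simpa only [layer, Set.mem_ofPred_eq, Fin.update_insertNth] using
    hS.ncard_update_mem (k.insertNth 0 x) k

theorem isDoubleMDSCode_layer {S : Set (Fin (n + 1) → V4)} (hS : IsDoubleMDSCode S)
    (k : Fin (n + 1)) (l : V4) : IsDoubleMDSCode (layer S k l) := by
  intro x i
  rw [ncard_kEdge_inter]
  simpa only [layer, Set.mem_ofPred_eq, Fin.insertNth_update] using
    hS.ncard_update_mem (k.insertNth l x) (k.succAbove i)

section Flip

variable {D : Set (Fin n → V4)} {T : Fin n → Bool}

theorem ncard_cubeTrace_edge_add (hD : IsDoubleMDSCode D) (T b : Fin n → Bool) (i : Fin n) :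
    {v | Function.update b i v ∈ cubeTrace D T}.ncard +
      {v | Function.update b i v ∈ cubeTrace D (flipAt T i)}.ncard = 2 := by
  rw [← hD.ncard_update_mem (cubePoint T b) i, ← ncard_preimage_letter_add _ (T i)]
  simp only [cubeTrace, flipAt, Set.mem_preimage, cubePoint_update_update, cubePoint_update T]
  rfl

theorem cubeTrace_flipAt_eq_empty (hD : IsDoubleMDSCode D) (hT : cubeTrace D T = Set.univ)
    (i : Fin n) : cubeTrace D (flipAt T i) = ∅ := by
  refine Set.eq_empty_of_forall_notMem fun b hb => ?_
  have edge := hD.ncard_cubeTrace_edge_add T b i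
  have other_half : {v | Function.update b i v ∈ cubeTrace D (flipAt T i)} = ∅ := by
    rw [← Set.ncard_eq_zero]
    simpa [hT] using edge
  exact other_half.subset (show b i ∈ _ by simpa using hb)

theorem exists_cubeTrace_flipAt_eq_compl_singleton (hD : IsDoubleMDSCode D) {β : Fin n → Bool}
    (hT : cubeTrace D T = {β}) (i : Fin n) :
    ∃ v, cubeTrace D (flipAt T i) = {Function.update β i v}ᶜ := by
  obtain ⟨w, hw⟩ : ∃ w, {v | Function.update β i v ∈ cubeTrace D (flipAt T i)} = {w} := by
    have edge := hD.ncard_cubeTrace_edge_add T β i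
    have first_half : {v | Function.update β i v ∈ cubeTrace D T} = {β i} := by
      ext v; simp [hT]
    rw [first_half, Set.ncard_singleton] at edge
    exact Set.ncard_eq_one.1 (by omega)
  refine ⟨!w, Set.ext fun b => ?_⟩
  by_cases hb : ∃ v, Function.update β i v = b
  · obtain ⟨v, rfl⟩ := hb
    calc Function.update β i v ∈ cubeTrace D (flipAt T i) ↔ v = w := Set.ext_iff.1 hw v
      _ ↔ Function.update β i v ∈ {Function.update β i !w}ᶜ := by
        simp [(Function.update_injective β i).eq_iff]
  · have first_half : {v | Function.update b i v ∈ cubeTrace D T} = ∅ := by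
      refine Set.eq_empty_of_forall_notMem fun v hv => hb ⟨b i, ?_⟩
      rw [Set.mem_ofPred_eq, hT, Set.mem_singleton_iff] at hv
      simp [← hv]
    have edge := hD.ncard_cubeTrace_edge_add T b i
    rw [first_half, Set.ncard_empty, zero_add] at edge
    have other_half : {v | Function.update b i v ∈ cubeTrace D (flipAt T i)} = Set.univ :=
      Set.eq_univ_iff_ncard _ |>.2 (by simp [edge])
    have b_mem : b i ∈ {v | Function.update b i v ∈ cubeTrace D (flipAt T i)} :=
      other_half ▸ Set.mem_univ _
    exact iff_of_true (by simpa using b_mem) fun h => hb ⟨_, h.symm⟩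

end Flip

theorem sum_ncard_cubeTrace_layer {S : Set (Fin (n + 1) → V4)} (hS : IsDoubleMDSCode S)
    (k : Fin (n + 1)) (T : Fin n → Bool) :
    ∑ l, (cubeTrace (layer S k l) T).ncard = 2 ^ n * 2 := by
  classical
  calc ∑ l, (cubeTrace (layer S k l) T).ncard
      = ∑ l, (Finset.univ.filter fun b => cubePoint T b ∈ layer S k l).card :=
        Finset.sum_congr rfl fun l _ => by
          rw [← Set.ncard_coe_finset]; simp [cubeTrace, Set.preimage]
    _ = ∑ b, (Finset.univ.filter fun l => cubePoint T b ∈ layer S k l).card :=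
        Finset.sum_card_bipartiteAbove_eq_sum_card_bipartiteBelow
          fun l b => cubePoint T b ∈ layer S k l
    _ = ∑ _b : Fin n → Bool, 2 := Finset.sum_congr rfl fun b _ => by
        rw [← hS.ncard_setOf_mem_layer k (cubePoint T b), ← Set.ncard_coe_finset]; simp
    _ = 2 ^ n * 2 := by simp

end IsDoubleMDSCode

end DoubleMDSCode

section Signing

variable {n : ℕ}

/-- `c` is a proper 2-colouring, by signs, of the subgraph of the Hamming graph on `Σ^n` induced by
`S`. A splitting of `S` gives one, so its absence proves unsplittability. Values of `c` outside `S`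
are irrelevant. -/
def IsProperSigning (S : Set (Fin n → V4)) (c : (Fin n → V4) → ℤˣ) : Prop :=
  ∀ x k a, x ∈ S → Function.update x k a ∈ S → a ≠ x k → c (Function.update x k a) = -c x

theorem IsSplittable.exists_isProperSigning {S : Set (Fin n → V4)} (hS : IsSplittable S) :
    ∃ c, IsProperSigning S c := by
  classical
  obtain ⟨C₁, C₂, hC₁, hC₂, -, rfl⟩ := hS
  refine ⟨fun x => if x ∈ C₁ then 1 else -1, fun x k a hx ha hne => ?_⟩
  by_cases hx₁ : x ∈ C₁ <;> by_cases ha₁ : Function.update x k a ∈ C₁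
  · exact absurd (hC₁.eq_of_update_mem hx₁ ha₁) hne
  · simp [hx₁, ha₁]
  · simp [hx₁, ha₁]
  · exact absurd (hC₂.eq_of_update_mem (hx.resolve_left hx₁) (ha.resolve_left ha₁)) hne

/-- The restriction of a signing to the `l`-th layer in direction `k`. -/
def layerSigning (c : (Fin (n + 1) → V4) → ℤˣ) (k : Fin (n + 1)) (l : V4) (x : Fin n → V4) : ℤˣ :=
  c (k.insertNth l x)

/-- The signing `c` on the cube selected by `T`, multiplied by the parity of the vertex, which makes
a proper signing constant on connected parts of the cube. -/
def parityTwist (c : (Fin n → V4) → ℤˣ) (T b : Fin n → Bool) : ℤˣ :=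
  c (cubePoint T b) * cubeSign b

namespace IsProperSigning

section Cube

variable {S : Set (Fin n → V4)} {c : (Fin n → V4) → ℤˣ} {T b b' γ : Fin n → Bool} {i : Fin n}

theorem parityTwist_flipAt (hc : IsProperSigning S c) (hb : b ∈ cubeTrace S T)
    (hb' : flipAt b i ∈ cubeTrace S T) : parityTwist c T (flipAt b i) = parityTwist c T b := by
  have edge : cubePoint T (flipAt b i) = Function.update (cubePoint T b) i (letter (T i) !b i) :=
    cubePoint_update ..
  have opposite : c (cubePoint T (flipAt b i)) = -c (cubePoint T b) := by
    rw [cubeTrace, Set.mem_preimage, edge] at hb'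
    rw [edge]
    exact hc _ _ _ hb hb' ((letter_injective _).ne (by simp))
  rw [parityTwist, parityTwist, opposite, cubeSign_flipAt, neg_mul_neg]

theorem parityTwist_eq_of_cubeTrace_eq_univ (hc : IsProperSigning S c)
    (hT : cubeTrace S T = Set.univ) : parityTwist c T b = parityTwist c T b' :=
  eq_of_forall_piecewise_mem (U := cubeTrace S T) (fun _ _ => hc.parityTwist_flipAt)
    fun _ => hT ▸ Set.mem_univ _

theorem parityTwist_eq_of_cubeTrace_eq_compl_singleton (hc : IsProperSigning S c)
    (hT : cubeTrace S T = {γ}ᶜ) (hb : b ≠ γ) (hb' : b' ≠ γ) :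
    parityTwist c T b = parityTwist c T b' :=
  eq_of_flipAt_invariant_on_compl_singleton
    (fun _ _ h h' => hc.parityTwist_flipAt (hT.symm.subset h) (hT.symm.subset h')) hb hb'

theorem parityTwist_flipAt_update {v : Bool} (hc : IsProperSigning S c) (hb : b ∈ cubeTrace S T)
    (hv : Function.update b i v ∈ cubeTrace S (flipAt T i)) :
    parityTwist c (flipAt T i) (Function.update b i v) =
      if v = b i then -parityTwist c T b else parityTwist c T b := by
  have opposite : c (cubePoint (flipAt T i) (Function.update b i v)) = -c (cubePoint T b) := by
    rw [cubeTrace, Set.mem_preimage, flipAt, cubePoint_update_update] at hv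
    rw [flipAt, cubePoint_update_update]
    exact hc _ _ _ hb hv (letter_not_ne _ _ _)
  rw [parityTwist, parityTwist, opposite]
  split_ifs with h
  · rw [h, Function.update_eq_self, neg_mul]
  · rw [Bool.eq_not.2 h, ← flipAt, cubeSign_flipAt, neg_mul_neg]

end Cube

section Layer

variable {S : Set (Fin (n + 1) → V4)} {c : (Fin (n + 1) → V4) → ℤˣ}

theorem isProperSigning_layerSigning (hc : IsProperSigning S c) (k : Fin (n + 1)) (l : V4) :
    IsProperSigning (layer S k l) (layerSigning c k l) := by
  intro x i a hx ha hne
  rw [layer, Set.mem_ofPred_eq, Fin.insertNth_update] at ha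
  simpa only [layerSigning, Fin.insertNth_update] using hc _ _ _ hx ha (by simpa using hne)

theorem parityTwist_layerSigning_eq_neg (hc : IsProperSigning S c) {k : Fin (n + 1)} {l l' : V4}
    (hl : l ≠ l') {T b : Fin n → Bool} (hb : b ∈ cubeTrace (layer S k l) T)
    (hb' : b ∈ cubeTrace (layer S k l') T) :
    parityTwist (layerSigning c k l) T b = -parityTwist (layerSigning c k l') T b := by
  have opposite := hc (k.insertNth l' (cubePoint T b)) k l hb'
    (by rw [Fin.update_insertNth]; exact hb) (by simpa using hl)
  rw [Fin.update_insertNth] at opposite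
  rw [parityTwist, parityTwist, layerSigning, opposite, neg_mul, layerSigning]

end Layer

end IsProperSigning

end Signing

section Obstruction

variable {n : ℕ} {S : Set (Fin (n + 1) → V4)} {k : Fin (n + 1)} {l₀ l₁ l₂ : V4}
  {T β₁ β₂ : Fin n → Bool}

/-- Over the cube selected by `T`, three distinct layers `l₀`, `l₁`, `l₂` of `S` consist of all
vertices, of `β₁` only and of `β₂` only. This is the configuration that obstructs a signing. -/
structure HasFullSingletonTraces (S : Set (Fin (n + 1) → V4)) (k : Fin (n + 1)) (l₀ l₁ l₂ : V4)
    (T β₁ β₂ : Fin n → Bool) : Prop where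
  ne₀₁ : l₀ ≠ l₁
  ne₀₂ : l₀ ≠ l₂
  ne₁₂ : l₁ ≠ l₂
  full : cubeTrace (layer S k l₀) T = Set.univ
  fst : cubeTrace (layer S k l₁) T = {β₁}
  snd : cubeTrace (layer S k l₂) T = {β₂}

namespace HasFullSingletonTraces

theorem of_vertex_ne (full : cubeTrace (layer S k l₀) T = Set.univ)
    (fst : cubeTrace (layer S k l₁) T = {β₁}) (snd : cubeTrace (layer S k l₂) T = {β₂})
    (hβ : β₁ ≠ β₂) : HasFullSingletonTraces S k l₀ l₁ l₂ T β₁ β₂ where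
  ne₀₁ := by
    rintro rfl
    exact hβ.symm ((full.symm.trans fst).subset (Set.mem_univ β₂))
  ne₀₂ := by
    rintro rfl
    exact hβ ((full.symm.trans snd).subset (Set.mem_univ β₁))
  ne₁₂ := by
    rintro rfl
    exact hβ (Set.singleton_injective (fst.symm.trans snd))
  full := full
  fst := fst
  snd := snd

theorem vertex_ne (h : HasFullSingletonTraces S k l₀ l₁ l₂ T β₁ β₂) (hS : IsDoubleMDSCode S) :
    β₁ ≠ β₂ := by
  rintro rfl
  have three_layers : {l₀, l₁, l₂} ⊆ {l : V4 | cubePoint T β₁ ∈ layer S k l} := by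
    rintro l (rfl | rfl | rfl)
    · exact h.full.symm.subset (Set.mem_univ β₁)
    · exact h.fst.symm.subset rfl
    · exact h.snd.symm.subset rfl
  have three_le_two := Set.ncard_le_ncard three_layers
  rw [hS.ncard_setOf_mem_layer, Set.ncard_eq_three.2 ⟨l₀, l₁, l₂, h.ne₀₁, h.ne₀₂, h.ne₁₂, rfl⟩]
    at three_le_two
  omega

theorem exists_compl_flipAt (h : HasFullSingletonTraces S k l₀ l₁ l₂ T β₁ β₂)
    (hS : IsDoubleMDSCode S) (i : Fin n) :
    ∃ v₁ v₂, HasFullSingletonTraces Sᶜ k l₀ l₁ l₂ (flipAt T i)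
      (Function.update β₁ i v₁) (Function.update β₂ i v₂) := by
  have hlayer := hS.isDoubleMDSCode_layer k
  have empty := (hlayer l₀).cubeTrace_flipAt_eq_empty h.full i
  obtain ⟨v₁, punctured₁⟩ := (hlayer l₁).exists_cubeTrace_flipAt_eq_compl_singleton h.fst i
  obtain ⟨v₂, punctured₂⟩ := (hlayer l₂).exists_cubeTrace_flipAt_eq_compl_singleton h.snd i
  exact ⟨v₁, v₂, h.ne₀₁, h.ne₀₂, h.ne₁₂, compl_eq_top.2 empty,
    compl_eq_comm.1 punctured₁.symm, compl_eq_comm.1 punctured₂.symm⟩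

section Signing

variable {c : (Fin (n + 1) → V4) → ℤˣ}

theorem parityTwist_fst_eq_snd (h : HasFullSingletonTraces S k l₀ l₁ l₂ T β₁ β₂)
    (hc : IsProperSigning S c) :
    parityTwist (layerSigning c k l₁) T β₁ = parityTwist (layerSigning c k l₂) T β₂ :=
  calc parityTwist (layerSigning c k l₁) T β₁
      = -parityTwist (layerSigning c k l₀) T β₁ :=
        hc.parityTwist_layerSigning_eq_neg h.ne₀₁.symm (by simp [h.fst]) (by simp [h.full])
    _ = -parityTwist (layerSigning c k l₀) T β₂ := congrArg _ <|
        (hc.isProperSigning_layerSigning k l₀).parityTwist_eq_of_cubeTrace_eq_univ h.full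
    _ = parityTwist (layerSigning c k l₂) T β₂ := .symm <|
        hc.parityTwist_layerSigning_eq_neg h.ne₀₂.symm (by simp [h.snd]) (by simp [h.full])

theorem cubeTrace_layer_fst_of_compl (h : HasFullSingletonTraces Sᶜ k l₀ l₁ l₂ T β₁ β₂) :
    cubeTrace (layer S k l₁) T = {β₁}ᶜ :=
  (compl_eq_comm.1 h.fst).symm

theorem cubeTrace_layer_snd_of_compl (h : HasFullSingletonTraces Sᶜ k l₀ l₁ l₂ T β₁ β₂) :
    cubeTrace (layer S k l₂) T = {β₂}ᶜ :=
  (compl_eq_comm.1 h.snd).symm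

theorem parityTwist_fst_eq_neg_snd_of_compl (hn : 2 ≤ n)
    (h : HasFullSingletonTraces Sᶜ k l₀ l₁ l₂ T β₁ β₂) (hc : IsProperSigning S c)
    {b₁ b₂ : Fin n → Bool} (hb₁ : b₁ ≠ β₁) (hb₂ : b₂ ≠ β₂) :
    parityTwist (layerSigning c k l₁) T b₁ = -parityTwist (layerSigning c k l₂) T b₂ := by
  have punctured₁ := h.cubeTrace_layer_fst_of_compl
  have punctured₂ := h.cubeTrace_layer_snd_of_compl
  have three_le_pow : 3 ≤ 2 ^ n := (Nat.le_succ 3).trans (Nat.pow_le_pow_right two_pos hn)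
  have three_le_card : 3 ≤ ENat.card (Fin n → Bool) := by
    simpa [ENat.card_eq_coe_fintype_card] using mod_cast three_le_pow
  obtain ⟨b, hbβ₁, hbβ₂⟩ := ENat.exists_ne_ne_of_three_le three_le_card β₁ β₂
  calc parityTwist (layerSigning c k l₁) T b₁
      = parityTwist (layerSigning c k l₁) T b :=
        (hc.isProperSigning_layerSigning k l₁).parityTwist_eq_of_cubeTrace_eq_compl_singleton
          punctured₁ hb₁ hbβ₁
    _ = -parityTwist (layerSigning c k l₂) T b :=
        hc.parityTwist_layerSigning_eq_neg h.ne₁₂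
          (punctured₁.symm.subset hbβ₁) (punctured₂.symm.subset hbβ₂)
    _ = -parityTwist (layerSigning c k l₂) T b₂ := congrArg _ <|
        (hc.isProperSigning_layerSigning k l₂).parityTwist_eq_of_cubeTrace_eq_compl_singleton
          punctured₂ hbβ₂ hb₂

theorem eq_of_compl_flipAt (hn : 2 ≤ n) (h : HasFullSingletonTraces S k l₀ l₁ l₂ T β₁ β₂)
    {i : Fin n} {v₁ v₂ : Bool}
    (h' : HasFullSingletonTraces Sᶜ k l₀ l₁ l₂ (flipAt T i)
      (Function.update β₁ i v₁) (Function.update β₂ i v₂))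
    (hc : IsProperSigning S c) (hi : β₁ i ≠ β₂ i) : v₁ = v₂ := by
  by_contra hv
  have same_side : (!v₁) = β₁ i ↔ (!v₂) = β₂ i := by
    revert hv hi
    cases v₁ <;> cases v₂ <;> cases β₁ i <;> cases β₂ i <;> decide
  have update_not_ne (β : Fin n → Bool) (v : Bool) :
      Function.update β i (!v) ≠ Function.update β i v :=
    (Function.update_injective β i).ne (Bool.not_ne_self v)
  have cross₁ := (hc.isProperSigning_layerSigning k l₁).parityTwist_flipAt_update
    (h.fst.symm.subset rfl) (h'.cubeTrace_layer_fst_of_compl.symm.subset (update_not_ne β₁ v₁))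
  have cross₂ := (hc.isProperSigning_layerSigning k l₂).parityTwist_flipAt_update
    (h.snd.symm.subset rfl) (h'.cubeTrace_layer_snd_of_compl.symm.subset (update_not_ne β₂ v₂))
  have twists_eq : parityTwist (layerSigning c k l₁) (flipAt T i) (Function.update β₁ i !v₁) =
      parityTwist (layerSigning c k l₂) (flipAt T i) (Function.update β₂ i !v₂) := by
    rw [cross₁, cross₂, h.parityTwist_fst_eq_snd hc]
    simp only [same_side]
  exact units_ne_neg_self _ <| twists_eq.symm.trans <|
    h'.parityTwist_fst_eq_neg_snd_of_compl hn hc (update_not_ne β₁ v₁) (update_not_ne β₂ v₂)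

end Signing

theorem not_exists_isProperSigning (hn : 2 ≤ n)
    (h : HasFullSingletonTraces S k l₀ l₁ l₂ T β₁ β₂) (hS : IsDoubleMDSCode S) :
    (¬∃ c, IsProperSigning S c) ∧ ¬∃ c, IsProperSigning Sᶜ c := by
  induction hd : hammingDist β₁ β₂ using Nat.strong_induction_on generalizing S T β₁ β₂ with
  | _ d ih =>
    obtain ⟨i, hi⟩ := Function.ne_iff.1 (h.vertex_ne hS)
    obtain ⟨v₁, v₂, h'⟩ := h.exists_compl_flipAt hS i
    have unsignable_of_eq (hv : v₁ = v₂) :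
        (¬∃ c, IsProperSigning Sᶜ c) ∧ ¬∃ c, IsProperSigning Sᶜᶜ c := by
      subst hv
      exact ih _ (hd ▸ hammingDist_update_lt hi v₁) h' hS.compl rfl
    rw [compl_compl] at unsignable_of_eq
    constructor
    · rintro ⟨c, hc⟩
      exact (unsignable_of_eq (h.eq_of_compl_flipAt hn h' hc hi)).2 ⟨c, hc⟩
    · rintro ⟨c, hc⟩
      have h'' : HasFullSingletonTraces Sᶜᶜ k l₀ l₁ l₂ (flipAt (flipAt T i) i)
          (Function.update (Function.update β₁ i v₁) i (β₁ i))
          (Function.update (Function.update β₂ i v₂) i (β₂ i)) := by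
        simpa [flipAt_flipAt] using h
      have hv : v₁ = v₂ := by
        by_contra hv
        exact hi (h'.eq_of_compl_flipAt hn h'' hc (by simpa using hv))
      exact (unsignable_of_eq hv).1 ⟨c, hc⟩

theorem not_isSplittable (hn : 2 ≤ n) (h : HasFullSingletonTraces S k l₀ l₁ l₂ T β₁ β₂)
    (hS : IsDoubleMDSCode S) : ¬IsSplittable S ∧ ¬IsSplittable Sᶜ :=
  (h.not_exists_isProperSigning hn hS).imp
    (mt IsSplittable.exists_isProperSigning) (mt IsSplittable.exists_isProperSigning)

end HasFullSingletonTraces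

end Obstruction

section BooleanTraces

theorem two_mul_card_le_sum_add_card_filter_eq_one {α : Type*} (s : Finset α) {t : α → ℕ}
    (ht : ∀ a ∈ s, 0 < t a) : 2 * s.card ≤ ∑ a ∈ s, t a + (s.filter fun a => t a = 1).card := by
  rw [Finset.card_filter, ← Finset.sum_add_distrib, mul_comm, ← smul_eq_mul]
  refine Finset.card_nsmul_le_sum _ _ _ fun a ha => ?_
  have := ht a ha
  split_ifs <;> omega

/-- The three remaining traces are nonempty and have `8 - 4 = 4` points in total, so two of them
are singletons. -/
theorem exists_hasFullSingletonTraces_of_nonempty {S : Set (Fin 3 → V4)} (hS : IsDoubleMDSCode S)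
    {k : Fin 3} {l₀ : V4} {T : Fin 2 → Bool} (full : cubeTrace (layer S k l₀) T = Set.univ)
    (nonempty : ∀ l, (cubeTrace (layer S k l) T).Nonempty) :
    ∃ l₁ l₂ β₁ β₂, HasFullSingletonTraces S k l₀ l₁ l₂ T β₁ β₂ := by
  have sum_eq : ∑ l ∈ Finset.univ.erase l₀, (cubeTrace (layer S k l) T).ncard = 4 := by
    have total := hS.sum_ncard_cubeTrace_layer k T
    rw [← Finset.add_sum_erase _ _ (Finset.mem_univ l₀), full, Set.ncard_univ] at total
    exact Nat.add_left_cancel (n := 4) (by simpa using total)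
  have one_lt : 1 < ((Finset.univ.erase l₀).filter
      fun l => (cubeTrace (layer S k l) T).ncard = 1).card := by
    have pigeonhole := two_mul_card_le_sum_add_card_filter_eq_one (Finset.univ.erase l₀)
      fun l _ => (Set.ncard_pos (Set.toFinite _)).2 (nonempty l)
    rw [sum_eq, Finset.card_erase_of_mem (Finset.mem_univ l₀), Finset.card_fin] at pigeonhole
    omega
  obtain ⟨l₁, hl₁, l₂, hl₂, ne₁₂⟩ := Finset.one_lt_card.1 one_lt
  rw [Finset.mem_filter, Finset.mem_erase, Set.ncard_eq_one] at hl₁ hl₂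
  obtain ⟨⟨ne₀₁, -⟩, β₁, fst⟩ := hl₁
  obtain ⟨⟨ne₀₂, -⟩, β₂, snd⟩ := hl₂
  exact ⟨l₁, l₂, β₁, β₂, ne₀₁.symm, ne₀₂.symm, ne₁₂, full, fst, snd⟩

theorem exists_hasFullSingletonTraces_of_antipodal {n : ℕ} [Nonempty (Fin n)]
    {S : Set (Fin (n + 1) → V4)} {k : Fin (n + 1)} {l₀ l₁ l₂ : V4} {α : Fin n → V4}
    (hα : α ∈ boolCube n) (h₀ : layer S k l₀ ∩ boolCube n = boolCube n)
    (h₁ : layer S k l₁ ∩ boolCube n = {α})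
    (h₂ : layer S k l₂ ∩ boolCube n = {fun i => 1 - α i}) :
    ∃ β₁ β₂, HasFullSingletonTraces S k l₀ l₁ l₂ (fun _ => false) β₁ β₂ := by
  obtain ⟨β, rfl⟩ := (range_cubePoint_false n).symm.subset hα
  rw [← cubePoint_false_not] at h₂
  refine ⟨β, fun i => !β i, .of_vertex_ne ?_ ?_ ?_ ?_⟩
  · rw [← cubeTrace_inter_boolCube, h₀, cubeTrace_boolCube]
  · rw [← cubeTrace_inter_boolCube, h₁, cubeTrace_singleton_cubePoint]
  · rw [← cubeTrace_inter_boolCube, h₂, cubeTrace_singleton_cubePoint]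
  · exact Function.ne_iff.2 ⟨Classical.arbitrary _, by simp⟩

end BooleanTraces

/-- Proposition 7: let `S ⊆ Σ^(n+1)` (`n + 1 ≥ 3`) be a double-MDS-code,
`k` a direction, and `P_i` the intersection of the `i`-th layer of `S` in
direction `k` with the Boolean cube.  If either (a) `n + 1 = 3`, some `P_i`
is the whole Boolean square, and all `P_i` are nonempty, or (b)
`{P₀,P₁,P₂,P₃} = {cube, {ᾱ}, {¬ᾱ}, cube \ {ᾱ,¬ᾱ}}` for some cube vertex `ᾱ`
with complement `¬ᾱ`, then neither `S` nor `Σ^(n+1) \ S` is splittable. -/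
theorem unsplittable_from_boolean_traces (n : ℕ) (hn : 3 ≤ n + 1)
    (S : Set (Fin (n + 1) → V4)) (hS : IsDoubleMDSCode S) (k : Fin (n + 1))
    (P : V4 → Set (Fin n → V4))
    (hP : ∀ i : V4, P i = layer S k i ∩ boolCube n)
    (hcase :
      (n + 1 = 3 ∧ (∃ i : V4, P i = boolCube n) ∧ ∀ i : V4, (P i).Nonempty) ∨
      (∃ α ∈ boolCube n,
        ({P 0, P 1, P 2, P 3} : Set (Set (Fin n → V4))) =
          {boolCube n, {α}, {fun i => 1 - α i},
            boolCube n \ {α, fun i => 1 - α i}})) :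
    ¬ IsSplittable S ∧ ¬ IsSplittable Sᶜ := by
  have hn2 : 2 ≤ n := by omega
  suffices ∃ l₀ l₁ l₂ β₁ β₂, HasFullSingletonTraces S k l₀ l₁ l₂ (fun _ => false) β₁ β₂ by
    obtain ⟨l₀, l₁, l₂, β₁, β₂, h⟩ := this
    exact h.not_isSplittable hn2 hS
  rcases hcase with ⟨hn3, ⟨l₀, full⟩, nonempty⟩ | ⟨α, hα, traces⟩
  · obtain rfl : n = 2 := by omega
    rw [hP] at full
    refine ⟨l₀, exists_hasFullSingletonTraces_of_nonempty hS ?_ fun l => ?_⟩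
    · rw [← cubeTrace_inter_boolCube, full, cubeTrace_boolCube]
    · exact nonempty_cubeTrace_of_inter_boolCube (hP l ▸ nonempty l)
  · have : Nonempty (Fin n) := ⟨⟨0, by omega⟩⟩
    have range_P : Set.range P = {P 0, P 1, P 2, P 3} := by
      ext Q; simp [Fin.exists_fin_succ, eq_comm]
    rw [← range_P] at traces
    obtain ⟨l₀, h₀⟩ : boolCube n ∈ Set.range P := by simp [traces]
    obtain ⟨l₁, h₁⟩ : {α} ∈ Set.range P := by simp [traces]
    obtain ⟨l₂, h₂⟩ : {fun i => 1 - α i} ∈ Set.range P := by simp [traces]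
    rw [hP] at h₀ h₁ h₂
    exact ⟨l₀, l₁, l₂, exists_hasFullSingletonTraces_of_antipodal hα h₀ h₁ h₂⟩
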